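/- If F ⊆ 𝕋^d is an analytic set with dim_H F > s, then there exists a nonempty closed set H ⊆ F such that dim_H(Q ∩ H) > s for every dyadic cube Q with Q ∩ H ≠ ∅. -/

import Mathlib

/-!
The half-open dyadic cubes are neither open nor closed, so the first step is to make them so on the
parameter space: `F` is the image of a continuous `g` on the Baire space, and after refining the
Polish topology of the parameter space the preimages `g ⁻¹' Q` of all dyadic cubes are open
(`exists_continuous_isOpen_preimage_cube`).

Fix `t` with `s < t < dim_H F`, and let `c E` be the infimum of `∑ 2 ^ (-n t)` over covers of `E` by
dyadic cubes. Then `c E = 0` if and only if `E` has Hausdorff `t`-measure zero: one direction uses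
covers by cubes directly, the other that a set of diameter at most `2 ^ (-n)` meets at most `3 ^ d`
cubes of level `n`. In particular `c F > 0`.

Since dyadic cubes form a net, `c` is continuous along increasing unions of arbitrary sets
(`exists_lt_netContent_of_monotone`): if `A n` are nearly optimal covers of `E n`, the maximal cubes
of `A 0 ∪ … ∪ A n` still cost at most `c (E n)` plus the accumulated errors, because the cubes
discarded when `A (n + 1)` is added cover `E n` once more. Bounding the coordinates of the Baire
space one after the other then gives a compact `K` with `c (g '' K) > 0`
(`exists_isCompact_le_netContent`); as the preimages of cubes are open, a cover of `g '' K` by cubes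
already covers the image of one of the approximating sets. Hence `dim_H (g '' K) ≥ t > s`.

Finally `H` is obtained from `g '' K` by removing every cube `Q` with `dim_H (Q ∩ g '' K) ≤ s`. It is
the image of the compact set `K` minus an open set, hence closed, and the removed part is a
countable union of sets of dimension at most `s`, so each remaining cube keeps dimension `> s`
(`lt_dimH_inter_diff`).
-/

open MeasureTheory Filter Set Metric ENNReal

noncomputable section

/-- The level-`n` dyadic cube of the torus `𝕋^d` with index `k`: the image under the
quotient map of `∏_i [k_i 2^{-n}, (k_i + 1) 2^{-n})`. -/
def dyadicCube (d n : ℕ) (k : Fin d → Fin (2 ^ n)) : Set (Fin d → AddCircle (1 : ℝ)) :=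
  Set.univ.pi fun i =>
    ((↑·) : ℝ → AddCircle (1 : ℝ)) '' Set.Ico ((k i : ℝ) / 2 ^ n) (((k i : ℝ) + 1) / 2 ^ n)

/-! ### Net contents and their continuity along increasing unions -/

section NetContent

variable {X ι : Type*}

/-- The content of `E` attached to a family of sets `Q i` with weights: the least total weight
`W A` of a subfamily `A` covering `E`. The weights are encoded as a measure on the index type. -/
def netContent [MeasurableSpace ι] (W : Measure ι) (Q : ι → Set X) (E : Set X) : ℝ≥0∞ :=
  ⨅ (A : Set ι) (_ : E ⊆ ⋃ i ∈ A, Q i), W A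

/-- The members of the family `A` that are not contained in a member of `A` of smaller level. -/
def maximalCubes (lev : ι → ℕ) (Q : ι → Set X) (A : Set ι) : Set ι :=
  {i | i ∈ A ∧ ∀ j ∈ A, Q i ⊆ Q j → lev i ≤ lev j}

/-- A net: a set meeting a set of smaller or equal level is contained in it, and distinct sets
of the same level are disjoint. -/
structure IsNet (lev : ι → ℕ) (Q : ι → Set X) : Prop where
  nested : ∀ i j x, lev i ≤ lev j → x ∈ Q i → x ∈ Q j → Q j ⊆ Q i
  unique : ∀ i j x, lev i = lev j → x ∈ Q i → x ∈ Q j → i = j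

theorem subset_maximalCubes (lev : ι → ℕ) (Q : ι → Set X) (A : Set ι) :
    (⋃ i ∈ A, Q i) ⊆ ⋃ i ∈ maximalCubes lev Q A, Q i := by
  intro x hx
  simp only [mem_iUnion, exists_prop] at hx
  have hex : ∃ n, ∃ i ∈ A, x ∈ Q i ∧ lev i = n := by
    obtain ⟨i, hi, hxi⟩ := hx
    exact ⟨_, i, hi, hxi, rfl⟩
  classical
  obtain ⟨i, hi, hxi, hl⟩ := Nat.find_spec hex
  simp only [mem_iUnion, exists_prop]
  refine ⟨i, ⟨hi, fun j hj hij => ?_⟩, hxi⟩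
  rw [hl]
  exact Nat.find_min' hex ⟨j, hj, hij hxi, rfl⟩

variable [MeasurableSpace ι] {W : Measure ι} {lev : ι → ℕ} {Q : ι → Set X}

theorem netContent_le {E : Set X} {A : Set ι} (h : E ⊆ ⋃ i ∈ A, Q i) :
    netContent W Q E ≤ W A :=
  iInf₂_le A h

theorem netContent_mono {E E' : Set X} (h : E ⊆ E') : netContent W Q E ≤ netContent W Q E' :=
  le_iInf₂ fun _ hA => netContent_le (h.trans hA)

theorem exists_cover_of_netContent_lt {E : Set X} {a : ℝ≥0∞} (h : netContent W Q E < a) :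
    ∃ A : Set ι, E ⊆ (⋃ i ∈ A, Q i) ∧ W A < a := by
  simpa [netContent, iInf_lt_iff] using h

/-- Strong subadditivity of net contents at the level of covers: if `D` and `A` both cover `E`,
then a point of `E` lies in a cube of each; the larger one competes for maximality, and the
smaller ones that are left over still cover `E`. -/
theorem measure_maximalCubes_union_add_le [DiscreteMeasurableSpace ι] (hnet : IsNet lev Q)
    {D A : Set ι} {E : Set X} (hD : E ⊆ ⋃ i ∈ D, Q i) (hA : E ⊆ ⋃ i ∈ A, Q i) :
    W (maximalCubes lev Q (D ∪ A)) + netContent W Q E ≤ W (maximalCubes lev Q D) + W A := by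
  set M := maximalCubes lev Q (D ∪ A) with hM
  set C := maximalCubes lev Q D with hC
  have hsub : M ⊆ C ∪ A := by
    rintro i ⟨hi | hi, hmax⟩
    · exact Or.inl ⟨hi, fun j hj => hmax j (Or.inl hj)⟩
    · exact Or.inr hi
  have hcov : E ⊆ ⋃ i ∈ ((C ∪ A) \ M) ∪ (C ∩ A), Q i := by
    intro x hx
    obtain ⟨i, hi, hxi⟩ : ∃ i ∈ C, x ∈ Q i := by
      simpa using subset_maximalCubes lev Q D (hD hx)
    obtain ⟨j, hj, hxj⟩ : ∃ j ∈ A, x ∈ Q j := by simpa using hA hx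
    simp only [mem_iUnion, exists_prop]
    rcases lt_trichotomy (lev i) (lev j) with h | h | h
    · refine ⟨j, Or.inl ⟨Or.inr hj, fun hjM => ?_⟩, hxj⟩
      exact absurd (hjM.2 i (Or.inl hi.1) (hnet.nested i j x h.le hxi hxj)) (by omega)
    · obtain rfl := hnet.unique i j x h hxi hxj
      exact ⟨i, Or.inr ⟨hi, hj⟩, hxi⟩
    · refine ⟨i, Or.inl ⟨Or.inl hi, fun hiM => ?_⟩, hxi⟩
      exact absurd (hiM.2 j (Or.inr hj) (hnet.nested j i x h.le hxj hxi)) (by omega)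
  calc W M + netContent W Q E ≤ W M + (W ((C ∪ A) \ M) + W (C ∩ A)) := by
        gcongr
        exact (netContent_le hcov).trans (measure_union_le _ _)
    _ = W (C ∪ A) + W (C ∩ A) := by
        rw [← add_assoc, ← measure_sdiff_add_inter (C ∪ A) (MeasurableSet.of_discrete (s := M)),
          inter_eq_self_of_subset_right hsub, add_comm (W M)]
    _ = W C + W A := measure_union_add_inter _ MeasurableSet.of_discrete

/-- Net contents are continuous along increasing unions of arbitrary sets. -/
theorem exists_lt_netContent_of_monotone [DiscreteMeasurableSpace ι] (hnet : IsNet lev Q)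
    {E : ℕ → Set X} (hE : Monotone E) {a : ℝ≥0∞} (ha : a < netContent W Q (⋃ n, E n)) :
    ∃ n, a < netContent W Q (E n) := by
  by_contra! hcon
  have hatop : a ≠ ∞ := ha.ne_top
  have hfin : ∀ n, netContent W Q (E n) ≠ ∞ := fun n => ((hcon n).trans_lt hatop.lt_top).ne
  obtain ⟨δ, δpos, hδ⟩ := ENNReal.exists_pos_sum_of_countable' (tsub_pos_of_lt ha).ne' ℕ
  have hA : ∀ n, ∃ A : Set ι, E n ⊆ (⋃ i ∈ A, Q i) ∧ W A < netContent W Q (E n) + δ n :=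
    fun n => exists_cover_of_netContent_lt (ENNReal.lt_add_right (hfin n) (δpos n).ne')
  choose A hcov hW using hA
  let D : ℕ → Set ι := fun n => ⋃ m ∈ Finset.range (n + 1), A m
  have hDsucc : ∀ n, D (n + 1) = D n ∪ A (n + 1) := by
    intro n
    simp only [D]
    rw [Finset.range_add_one (n := n + 1), Finset.set_biUnion_insert, union_comm]
  have hDA : ∀ m n, m ≤ n → A m ⊆ D n := fun m n h =>
    subset_biUnion_of_mem (u := A) (Finset.mem_coe.2 (Finset.mem_range.2 (by omega)))
  have hDcov : ∀ n, E n ⊆ ⋃ i ∈ D n, Q i := fun n =>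
    (hcov n).trans (biUnion_subset_biUnion_left (hDA n n le_rfl))
  have hmain : ∀ n, W (maximalCubes lev Q (D n)) ≤
      netContent W Q (E n) + ∑ m ∈ Finset.range (n + 1), δ m := by
    intro n
    induction n with
    | zero =>
      have h0 : D 0 = A 0 := by simp [D]
      rw [h0]
      simpa using (measure_mono fun i hi => hi.1).trans (hW 0).le
    | succ n ih =>
      have h1 := measure_maximalCubes_union_add_le (W := W) hnet (hDcov n)
        ((hE (Nat.le_succ n)).trans (hcov (n + 1)))
      rw [← hDsucc] at h1
      have h2 := h1.trans (add_le_add ih (hW (n + 1)).le)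
      rw [← ENNReal.add_le_add_iff_right (hfin n), Finset.sum_range_succ _ (n + 1)]
      refine h2.trans (le_of_eq ?_)
      ring
  -- A cube that is maximal in the whole family is maximal in each `D n` containing it.
  set M := maximalCubes lev Q (⋃ n, D n) with hM
  have hMcov : (⋃ n, E n) ⊆ ⋃ i ∈ M, Q i := by
    refine Subset.trans ?_ (subset_maximalCubes lev Q _)
    exact iUnion_subset fun n =>
      (hDcov n).trans (biUnion_subset_biUnion_left (subset_iUnion D n))
  have hDmono : Monotone D := monotone_nat_of_le_succ fun n => by
    rw [hDsucc]; exact subset_union_left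
  have hMeq : M = ⋃ n, M ∩ D n := by
    rw [← inter_iUnion]
    exact (inter_eq_left.2 fun i hi => hi.1).symm
  have hWM : W M ≤ a + ∑' n, δ n := by
    rw [hMeq, Monotone.measure_iUnion fun m n h => inter_subset_inter_right _ (hDmono h)]
    refine iSup_le fun n => ?_
    have hsub : M ∩ D n ⊆ maximalCubes lev Q (D n) := fun i hi =>
      ⟨hi.2, fun j hj => hi.1.2 j (mem_iUnion.2 ⟨n, hj⟩)⟩
    exact (measure_mono hsub).trans ((hmain n).trans
      (add_le_add (hcon n) (ENNReal.sum_le_tsum _)))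
  have hlt : a + ∑' n, δ n < netContent W Q (⋃ n, E n) := by
    have := ENNReal.add_lt_add_left hatop hδ
    rwa [add_tsub_cancel_of_le ha.le] at this
  exact absurd ((netContent_le hMcov).trans hWM) (not_le.2 hlt)

/-- Capacitability: if `g` is defined on the Baire space and the preimages of the sets of the net
are open, then the content of the range of `g` is approximated from below by the contents of
images of compact sets. The compact set is a product of initial segments `[0, N j]`, each bound
`N j` being chosen so that restricting the `j`-th coordinate loses little content. -/
theorem exists_isCompact_le_netContent [DiscreteMeasurableSpace ι] (hnet : IsNet lev Q)
    {g : (ℕ → ℕ) → X} (hg : ∀ i, IsOpen (g ⁻¹' Q i)) {a : ℝ≥0∞}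
    (ha : a < netContent W Q (range g)) :
    ∃ K : Set (ℕ → ℕ), IsCompact K ∧ a ≤ netContent W Q (g '' K) := by
  have hstep : ∀ (n : ℕ) (S : Set (ℕ → ℕ)), ∃ m : ℕ, a < netContent W Q (g '' S) →
      a < netContent W Q (g '' (S ∩ {z | z n ≤ m})) := by
    intro n S
    by_cases h : a < netContent W Q (g '' S)
    · have hS : g '' S = ⋃ m, g '' (S ∩ {z | z n ≤ m}) := by
        rw [← image_iUnion, ← inter_iUnion]
        congr 1
        exact (inter_eq_left.2 fun z _ => mem_iUnion.2 ⟨z n, le_refl (z n)⟩).symm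
      rw [hS] at h
      obtain ⟨m, hm⟩ := exists_lt_netContent_of_monotone hnet
        (fun m m' hmm => image_mono (inter_subset_inter_right S
          fun z (hz : z n ≤ m) => hz.trans hmm)) h
      exact ⟨m, fun _ => hm⟩
    · exact ⟨0, fun h' => absurd h' h⟩
  choose m hm using hstep
  let S : ℕ → Set (ℕ → ℕ) := fun n =>
    Nat.rec (motive := fun _ => Set (ℕ → ℕ)) univ (fun n T => T ∩ {z | z n ≤ m n T}) n
  have hSs : ∀ n, S (n + 1) = S n ∩ {z | z n ≤ m n (S n)} := fun n => rfl
  let N : ℕ → ℕ := fun n => m n (S n)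
  have hS : ∀ n z, z ∈ S n ↔ ∀ j < n, z j ≤ N j := by
    intro n
    induction n with
    | zero => intro z; simp [S]
    | succ n ih =>
      intro z
      rw [hSs, mem_inter_iff, ih, Nat.forall_lt_succ_right]
      rfl
  have hSa : ∀ n, a < netContent W Q (g '' S n) := by
    intro n
    induction n with
    | zero => simpa [S] using ha
    | succ n ih => exact hm n _ ih
  have hK : IsCompact (univ.pi fun j => Iic (N j)) :=
    isCompact_univ_pi fun j => (finite_Iic (N j)).isCompact
  refine ⟨_, hK, le_iInf₂ fun A hA => ?_⟩
  -- The cover of `g '' K` already covers `g '' S n` for some `n`.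
  set V := g ⁻¹' ⋃ i ∈ A, Q i with hV
  have hVo : IsOpen V := by
    rw [hV, preimage_iUnion₂]
    exact isOpen_biUnion fun i _ => hg i
  have hKV : (univ.pi fun j => Iic (N j)) ⊆ V := image_subset_iff.1 hA
  obtain ⟨n, hn⟩ : ∃ n, S n ⊆ V := by
    by_contra! hcon
    simp only [not_subset] at hcon
    choose z hzS hzV using hcon
    obtain ⟨y, hyK, φ, hφ, hlim⟩ := hK.tendsto_subseq (x := fun n j => min (z n j) (N j))
      fun n j _ => mem_Iic.2 (min_le_right _ _)
    have hlim' : Tendsto (z ∘ φ) atTop (nhds y) := by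
      rw [tendsto_pi_nhds] at hlim ⊢
      intro j
      refine (hlim j).congr' ?_
      filter_upwards [eventually_gt_atTop j] with n hn
      exact min_eq_left ((hS _ _).1 (hzS (φ n)) j (hn.trans_le (hφ.id_le n)))
    exact hVo.isClosed_compl.mem_of_tendsto hlim' (Eventually.of_forall fun n => hzV (φ n))
      (hKV hyK)
  exact (hSa n).le.trans (netContent_le (image_subset_iff.2 hn))

end NetContent

/-! ### Dyadic cubes of the torus -/

section DyadicCubes

/-- The representative in `[0, 1)` of a point of the circle. -/
def circleRep (x : AddCircle (1 : ℝ)) : ℝ := AddCircle.equivIco 1 0 x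

theorem circleRep_mem (x : AddCircle (1 : ℝ)) : 0 ≤ circleRep x ∧ circleRep x < 1 := by
  simpa [circleRep] using (AddCircle.equivIco (1 : ℝ) 0 x).2

theorem coe_circleRep (x : AddCircle (1 : ℝ)) : (circleRep x : AddCircle (1 : ℝ)) = x :=
  AddCircle.coe_equivIco

theorem measurable_circleRep : Measurable circleRep :=
  measurable_subtype_coe.comp (AddCircle.measurableEquivIco (1 : ℝ) 0).measurable

theorem mem_dyadicArc_iff (n : ℕ) (k : Fin (2 ^ n)) (x : AddCircle (1 : ℝ)) :
    x ∈ ((↑·) : ℝ → AddCircle (1 : ℝ)) '' Ico ((k : ℝ) / 2 ^ n) (((k : ℝ) + 1) / 2 ^ n) ↔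
      ⌊circleRep x * 2 ^ n⌋₊ = (k : ℕ) := by
  have hpos : (0 : ℝ) < 2 ^ n := by positivity
  rw [Nat.floor_eq_iff (mul_nonneg (circleRep_mem x).1 hpos.le), ← div_le_iff₀ hpos,
    ← lt_div_iff₀ hpos]
  constructor
  · rintro ⟨y, hy, rfl⟩
    have hk : ((k : ℕ) : ℝ) + 1 ≤ 2 ^ n := by exact_mod_cast k.2
    have hy01 : y ∈ Ico (0 : ℝ) (0 + 1) :=
      ⟨le_trans (by positivity) hy.1, by
        rw [zero_add]; exact hy.2.trans_le ((div_le_one hpos).2 hk)⟩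
    have hrep : circleRep (y : AddCircle (1 : ℝ)) = y := AddCircle.equivIco_coe_of_mem hy01
    rw [hrep]
    exact hy
  · exact fun h => ⟨circleRep x, h, coe_circleRep x⟩

theorem mem_dyadicCube_iff {d n : ℕ} {k : Fin d → Fin (2 ^ n)} {x : Fin d → AddCircle (1 : ℝ)} :
    x ∈ dyadicCube d n k ↔ ∀ i, ⌊circleRep (x i) * 2 ^ n⌋₊ = (k i : ℕ) := by
  simp only [dyadicCube, mem_univ_pi, mem_dyadicArc_iff]

theorem measurableSet_dyadicCube (d n : ℕ) (k : Fin d → Fin (2 ^ n)) :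
    MeasurableSet (dyadicCube d n k) := by
  have : dyadicCube d n k = ⋂ i, {x | ⌊circleRep (x i) * 2 ^ n⌋₊ = (k i : ℕ)} := by
    ext x; simp [mem_dyadicCube_iff]
  rw [this]
  refine MeasurableSet.iInter fun i => ?_
  have hm : Measurable fun x : Fin d → AddCircle (1 : ℝ) => ⌊circleRep (x i) * 2 ^ n⌋₊ :=
    ((measurable_circleRep.comp (measurable_pi_apply i)).mul_const _).nat_floor
  exact hm (measurableSet_singleton _)

theorem floor_mul_two_pow_of_le {a : ℝ} {n m : ℕ} (h : n ≤ m) :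
    ⌊a * 2 ^ n⌋₊ = ⌊a * 2 ^ m⌋₊ / 2 ^ (m - n) := by
  rw [← Nat.floor_div_natCast (a * 2 ^ m) (2 ^ (m - n))]
  congr 1
  push_cast
  rw [_root_.eq_div_iff (by positivity), mul_assoc, ← pow_add, Nat.add_sub_cancel' h]

/-- The index type of all dyadic cubes of `𝕋^d`: a level and an index at that level. -/
def CubeIndex (d : ℕ) : Type := Σ n : ℕ, (Fin d → Fin (2 ^ n))

instance (d : ℕ) : Countable (CubeIndex d) :=
  inferInstanceAs (Countable (Σ n : ℕ, (Fin d → Fin (2 ^ n))))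

instance (d : ℕ) : MeasurableSpace (CubeIndex d) := ⊤

instance (d : ℕ) : DiscreteMeasurableSpace (CubeIndex d) := ⟨fun _ => trivial⟩

/-- The dyadic cube with a given index. -/
def cube {d : ℕ} (i : CubeIndex d) : Set (Fin d → AddCircle (1 : ℝ)) := dyadicCube d i.1 i.2

theorem isNet_cube (d : ℕ) : IsNet (fun i : CubeIndex d => i.1) cube where
  nested := by
    rintro ⟨n, k⟩ ⟨m, l⟩ x h hx hy z hz
    simp only [cube, mem_dyadicCube_iff] at *
    intro i
    rw [← hx i, floor_mul_two_pow_of_le h, floor_mul_two_pow_of_le h, hz i, hy i]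
  unique := by
    rintro ⟨n, k⟩ ⟨m, l⟩ x h hx hy
    obtain rfl : n = m := h
    simp only [cube, mem_dyadicCube_iff] at hx hy
    have : k = l := by
      ext i
      rw [← hx i, hy i]
    rw [this]

/-- The weights `2 ^ (-n t)` of the dyadic cubes of level `n`, as a measure on the indices. -/
def cubeWeight (d : ℕ) (t : ℝ) : Measure (CubeIndex d) :=
  Measure.sum fun i => (((2 : ℝ≥0∞)⁻¹ ^ i.1) ^ t) • Measure.dirac i

theorem cubeWeight_apply (d : ℕ) (t : ℝ) (A : Set (CubeIndex d)) :
    cubeWeight d t A = ∑' i, A.indicator (fun i => ((2 : ℝ≥0∞)⁻¹ ^ i.1) ^ t) i := by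
  rw [cubeWeight, Measure.sum_apply _ MeasurableSet.of_discrete]
  refine tsum_congr fun i => ?_
  by_cases h : i ∈ A <;> simp [h]

theorem ediam_cube_le {d : ℕ} (i : CubeIndex d) : ediam (cube i) ≤ (2 : ℝ≥0∞)⁻¹ ^ i.1 := by
  obtain ⟨n, k⟩ := i
  refine ediam_le fun x hx y hy => ?_
  simp only [cube, mem_dyadicCube_iff] at hx hy
  have hpos : (0 : ℝ) < 2 ^ n := by positivity
  have h2 : ((2 : ℝ≥0∞)⁻¹ ^ n) = ENNReal.ofReal ((2 ^ n)⁻¹) := by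
    rw [ENNReal.ofReal_inv_of_pos hpos, ENNReal.ofReal_pow (by norm_num), ENNReal.inv_pow]
    simp
  rw [h2, edist_dist]
  refine ENNReal.ofReal_le_ofReal ((dist_pi_le_iff (by positivity)).2 fun i => ?_)
  have hx1 := (Nat.floor_eq_iff (mul_nonneg (circleRep_mem (x i)).1 hpos.le)).1 (hx i)
  have hy1 := (Nat.floor_eq_iff (mul_nonneg (circleRep_mem (y i)).1 hpos.le)).1 (hy i)
  rw [← coe_circleRep (x i), ← coe_circleRep (y i), dist_eq_norm, ← AddCircle.coe_sub]
  rw [UnitAddCircle.norm_eq]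
  refine (round_le (circleRep (x i) - circleRep (y i)) 0).trans ?_
  rw [Int.cast_zero, sub_zero, ← one_div, le_div_iff₀ hpos]
  nth_rewrite 1 [← abs_of_pos hpos]
  rw [← abs_mul, sub_mul, abs_le]
  constructor <;> linarith [hx1.1, hx1.2, hy1.1, hy1.2]

/-- Two points of the circle at distance at most `2 ^ (-n)` lie in equal or adjacent dyadic arcs
of level `n`, where adjacency is understood modulo `2 ^ n`. -/
theorem exists_floor_eq_of_dist_le {n : ℕ} {x y : AddCircle (1 : ℝ)}
    (h : dist x y ≤ (2 ^ n)⁻¹) : ∃ e : Fin 3,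
      (⌊circleRep y * 2 ^ n⌋₊ : ℤ) = (⌊circleRep x * 2 ^ n⌋₊ + (e : ℤ) - 1) % 2 ^ n := by
  have hpos : (0 : ℝ) < 2 ^ n := by positivity
  set a := circleRep x with ha
  set b := circleRep y with hb
  have ha0 := circleRep_mem x
  have hb0 := circleRep_mem y
  rw [← ha] at ha0
  rw [← hb] at hb0
  have hd : |(b - a) - round (b - a)| ≤ (2 ^ n)⁻¹ := by
    rw [← UnitAddCircle.norm_eq, AddCircle.coe_sub, hb, ha]
    rw [show ((circleRep y : ℝ) : UnitAddCircle) = y from coe_circleRep y,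
      show ((circleRep x : ℝ) : UnitAddCircle) = x from coe_circleRep x]
    rwa [dist_comm, dist_eq_norm] at h
  set z := round (b - a) with hz
  rw [← one_div, le_div_iff₀ hpos] at hd
  nth_rewrite 1 [← abs_of_pos hpos] at hd
  rw [← abs_mul, abs_le] at hd
  have hA := (Nat.floor_eq_iff (mul_nonneg ha0.1 hpos.le)).1 rfl
  have hB := (Nat.floor_eq_iff (mul_nonneg hb0.1 hpos.le)).1 rfl
  set p := ⌊a * 2 ^ n⌋₊ with hp
  set q := ⌊b * 2 ^ n⌋₊ with hq
  have h1 : ((q : ℤ) - z * 2 ^ n - p : ℤ) < 2 := by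
    have : ((q : ℝ) - z * 2 ^ n - p) < 2 := by nlinarith [hA.1, hA.2, hB.1, hB.2, hd.1, hd.2]
    exact_mod_cast this
  have h2 : -2 < ((q : ℤ) - z * 2 ^ n - p : ℤ) := by
    have : -2 < ((q : ℝ) - z * 2 ^ n - p) := by nlinarith [hA.1, hA.2, hB.1, hB.2, hd.1, hd.2]
    exact_mod_cast this
  have hq2 : (q : ℤ) < 2 ^ n := by
    have : (q : ℝ) < 2 ^ n := hB.1.trans_lt (by nlinarith [hb0.2])
    exact_mod_cast this
  refine ⟨⟨((q : ℤ) - z * 2 ^ n - p + 1).toNat, by omega⟩, ?_⟩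
  have h3 : (p : ℤ) + (((q : ℤ) - z * 2 ^ n - p + 1).toNat : ℤ) - 1 = q + (-z) * 2 ^ n := by
    rw [Int.toNat_of_nonneg (by omega)]; ring
  dsimp only
  rw [h3, Int.add_mul_emod_self_right, Int.emod_eq_of_lt (by omega) hq2]

/-- A set of diameter at most `2 ^ (-n)` is covered by `3 ^ d` dyadic cubes of level `n`. -/
theorem exists_cover_of_ediam_le {d : ℕ} (t : ℝ) (n : ℕ) {S : Set (Fin d → AddCircle (1 : ℝ))}
    (hS : ediam S ≤ (2 : ℝ≥0∞)⁻¹ ^ n) : ∃ A : Set (CubeIndex d), S ⊆ (⋃ i ∈ A, cube i) ∧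
      cubeWeight d t A ≤ 3 ^ d * ((2 : ℝ≥0∞)⁻¹ ^ n) ^ t := by
  rcases S.eq_empty_or_nonempty with rfl | ⟨x, hx⟩
  · exact ⟨∅, by simp, by simp⟩
  have hpos : (0 : ℝ) < 2 ^ n := by positivity
  have hmod : ∀ (i : Fin d) (e : Fin 3),
      ((⌊circleRep (x i) * 2 ^ n⌋₊ + (e : ℤ) - 1) % 2 ^ n).toNat < 2 ^ n := by
    intro i e
    have h1 := Int.emod_nonneg (⌊circleRep (x i) * 2 ^ n⌋₊ + (e : ℤ) - 1)
      (by positivity : (2 : ℤ) ^ n ≠ 0)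
    have h2 := Int.emod_lt_of_pos (⌊circleRep (x i) * 2 ^ n⌋₊ + (e : ℤ) - 1)
      (by positivity : (0 : ℤ) < 2 ^ n)
    zify
    rw [Int.toNat_of_nonneg h1]
    exact h2
  let J : (Fin d → Fin 3) → CubeIndex d := fun e => ⟨n, fun i => ⟨_, hmod i (e i)⟩⟩
  refine ⟨⋃ e, {J e}, fun y hy => ?_, ?_⟩
  · have hdist : dist x y ≤ (2 ^ n)⁻¹ := by
      have h := (edist_le_ediam_of_mem hx hy).trans hS
      have h2 : ((2 : ℝ≥0∞)⁻¹ ^ n) = ENNReal.ofReal ((2 ^ n)⁻¹) := by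
        rw [ENNReal.ofReal_inv_of_pos hpos, ENNReal.ofReal_pow (by norm_num), ENNReal.inv_pow]
        simp
      rwa [h2, edist_dist, ENNReal.ofReal_le_ofReal_iff (by positivity)] at h
    choose e he using fun i => exists_floor_eq_of_dist_le ((dist_le_pi_dist x y i).trans hdist)
    simp only [mem_iUnion, mem_singleton_iff, exists_prop]
    refine ⟨J e, ⟨e, rfl⟩, ?_⟩
    refine mem_dyadicCube_iff.2 fun i => ?_
    simp only [J]
    rw [← he i, Int.toNat_natCast]
  · refine (measure_iUnion_le _).trans ?_
    rw [tsum_fintype]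
    have hs : ∀ e, cubeWeight d t {J e} = ((2 : ℝ≥0∞)⁻¹ ^ n) ^ t := by
      intro e
      rw [cubeWeight_apply, tsum_eq_single (J e)]
      · rw [indicator_of_mem (mem_singleton (J e))]
      · intro j hj
        simp [hj]
    simp [hs]

end DyadicCubes

/-! ### Comparison of the dyadic content with the Hausdorff measure -/

section Comparison

theorem hausdorffMeasure_eq_zero_of_netContent_eq_zero {d : ℕ} {t : ℝ} (ht : 0 < t)
    {E : Set (Fin d → AddCircle (1 : ℝ))} (h : netContent (cubeWeight d t) cube E = 0) :
    μH[t] E = 0 := by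
  classical
  have hr : ∀ n : ℕ, (0 : ℝ≥0∞) < (2 : ℝ≥0∞)⁻¹ ^ n := fun n =>
    ENNReal.pow_pos (by simp) n
  have hA : ∀ n : ℕ, ∃ A : Set (CubeIndex d), E ⊆ (⋃ i ∈ A, cube i) ∧
      cubeWeight d t A < ((2 : ℝ≥0∞)⁻¹ ^ n) ^ t := fun n =>
    exists_cover_of_netContent_lt (by
      rw [h]
      exact ENNReal.rpow_pos (hr n) (by simp))
  choose A hcov hW using hA
  have hlim : Tendsto (fun n : ℕ => (2 : ℝ≥0∞)⁻¹ ^ n) atTop (nhds 0) :=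
    ENNReal.tendsto_pow_atTop_nhds_zero_of_lt_one (by simp)
  have hlim2 : Tendsto (fun n : ℕ => ((2 : ℝ≥0∞)⁻¹ ^ n) ^ t) atTop (nhds 0) := by
    have := hlim.ennrpow_const t
    rwa [ENNReal.zero_rpow_of_pos ht] at this
  have hsum : ∀ n, ∑' i, ediam (if i ∈ A n then cube i else ∅) ^ t ≤ cubeWeight d t (A n) := by
    intro n
    rw [cubeWeight_apply]
    refine ENNReal.tsum_le_tsum fun i => ?_
    by_cases hi : i ∈ A n
    · simp only [hi, if_true, indicator_of_mem]
      exact ENNReal.rpow_le_rpow (ediam_cube_le i) ht.le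
    · simp [hi, ht]
  have key := Measure.hausdorffMeasure_le_liminf_tsum t E (l := atTop) _ hlim
    (fun n i => if i ∈ A n then cube i else ∅)
    (Eventually.of_forall fun n i => by
      have h1 : ediam (if i ∈ A n then cube i else ∅) ^ t < ((2 : ℝ≥0∞)⁻¹ ^ n) ^ t :=
        ((ENNReal.le_tsum i).trans (hsum n)).trans_lt (hW n)
      exact ((ENNReal.rpow_lt_rpow_iff ht).1 h1).le)
    (Eventually.of_forall fun n x hx => by
      obtain ⟨i, hi, hxi⟩ : ∃ i ∈ A n, x ∈ cube i := by simpa using hcov n hx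
      exact mem_iUnion.2 ⟨i, by simpa [hi] using hxi⟩)
  have hz : Tendsto (fun n => ∑' i, ediam (if i ∈ A n then cube i else ∅) ^ t) atTop (nhds 0) :=
    tendsto_of_tendsto_of_tendsto_of_le_of_le tendsto_const_nhds hlim2 (fun _ => zero_le)
      fun n => (hsum n).trans (hW n).le
  rw [hz.liminf_eq] at key
  exact le_antisymm key zero_le

/-- A dyadic scale comparable to a given size `D`, up to an arbitrarily small error that is only
needed when `D = 0`. -/
theorem exists_dyadic_scale {t : ℝ} (ht : 0 < t) {D δ : ℝ≥0∞} (hD : D ≤ 1) (hδ : 0 < δ) :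
    ∃ n : ℕ, D ≤ (2 : ℝ≥0∞)⁻¹ ^ n ∧ ((2 : ℝ≥0∞)⁻¹ ^ n) ^ t ≤ 2 ^ t * D ^ t + δ := by
  rcases eq_or_ne D 0 with rfl | hD0
  · have hlim : Tendsto (fun n : ℕ => (2 : ℝ≥0∞)⁻¹ ^ n) atTop (nhds 0) :=
      ENNReal.tendsto_pow_atTop_nhds_zero_of_lt_one (by simp)
    have hlim2 := hlim.ennrpow_const t
    rw [ENNReal.zero_rpow_of_pos ht] at hlim2
    obtain ⟨n, hn⟩ := (hlim2.eventually (gt_mem_nhds hδ)).exists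
    exact ⟨n, zero_le, hn.le.trans le_add_self⟩
  · have hlim : Tendsto (fun n : ℕ => (2 : ℝ≥0∞)⁻¹ ^ n) atTop (nhds 0) :=
      ENNReal.tendsto_pow_atTop_nhds_zero_of_lt_one (by simp)
    have hex : ∃ n : ℕ, (2 : ℝ≥0∞)⁻¹ ^ n < D :=
      (hlim.eventually (gt_mem_nhds (pos_iff_ne_zero.2 hD0))).exists
    classical
    obtain ⟨m, hm⟩ : ∃ m, Nat.find hex = m + 1 := by
      refine Nat.exists_eq_succ_of_ne_zero fun h0 => ?_
      have := Nat.find_spec hex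
      rw [h0, pow_zero] at this
      exact absurd hD (not_le.2 this)
    have hspec := Nat.find_spec hex
    rw [hm, pow_succ] at hspec
    refine ⟨m, not_lt.1 (Nat.find_min hex (by omega)), le_add_right ?_⟩
    rw [← ENNReal.mul_rpow_of_nonneg _ _ ht.le]
    refine ENNReal.rpow_le_rpow ?_ ht.le
    calc (2 : ℝ≥0∞)⁻¹ ^ m = 2 * ((2 : ℝ≥0∞)⁻¹ ^ m * 2⁻¹) := by
          rw [mul_comm, mul_assoc, ENNReal.inv_mul_cancel (by simp) (by simp), mul_one]
      _ ≤ 2 * D := by gcongr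

theorem netContent_eq_zero_of_hausdorffMeasure_eq_zero {d : ℕ} {t : ℝ} (ht : 0 < t)
    {E : Set (Fin d → AddCircle (1 : ℝ))} (h : μH[t] E = 0) :
    netContent (cubeWeight d t) cube E = 0 := by
  have hC0 : (2 : ℝ≥0∞) ^ t ≠ ∞ := ENNReal.rpow_ne_top_of_nonneg ht.le (by simp)
  have h3 : (3 : ℝ≥0∞) ^ d ≠ ∞ := ENNReal.pow_ne_top (by simp)
  have hbound : ∀ ε : ℝ≥0∞, 0 < ε →
      netContent (cubeWeight d t) cube E ≤ 3 ^ d * (2 ^ t * ε + ε) := by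
    intro ε hε
    rw [Measure.hausdorffMeasure_apply] at h
    have h1 : (⨅ (T : ℕ → Set (Fin d → AddCircle (1 : ℝ))) (_ : E ⊆ ⋃ n, T n)
        (_ : ∀ n, ediam (T n) ≤ 1), ∑' n, ⨆ _ : (T n).Nonempty, ediam (T n) ^ t) < ε := by
      refine lt_of_le_of_lt ?_ hε
      rw [← h]
      exact le_iSup₂ (f := fun (r : ℝ≥0∞) (_ : 0 < r) =>
        ⨅ (T : ℕ → Set (Fin d → AddCircle (1 : ℝ))) (_ : E ⊆ ⋃ n, T n)
        (_ : ∀ n, ediam (T n) ≤ r), ∑' n, ⨆ _ : (T n).Nonempty, ediam (T n) ^ t) 1 one_pos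
    simp only [iInf_lt_iff] at h1
    obtain ⟨T, hT, hT1, hTsum⟩ := h1
    obtain ⟨δ, δpos, hδ⟩ := ENNReal.exists_pos_sum_of_countable' hε.ne' ℕ
    choose m hm hmt using fun n => exists_dyadic_scale ht (hT1 n) (δpos n)
    choose A hA hWA using fun n => exists_cover_of_ediam_le t (m n) (hm n)
    have hEA : E ⊆ ⋃ i ∈ ⋃ n, A n, cube i := by
      rw [biUnion_iUnion]
      exact hT.trans (iUnion_mono hA)
    have hdiam : ∀ n, ediam (T n) ^ t = ⨆ _ : (T n).Nonempty, ediam (T n) ^ t := by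
      intro n
      rcases (T n).eq_empty_or_nonempty with he | hne
      · simp [he, ht]
      · simp [hne]
    calc netContent (cubeWeight d t) cube E ≤ cubeWeight d t (⋃ n, A n) := netContent_le hEA
      _ ≤ ∑' n, cubeWeight d t (A n) := measure_iUnion_le _
      _ ≤ ∑' n, 3 ^ d * (2 ^ t * ediam (T n) ^ t + δ n) :=
          ENNReal.tsum_le_tsum fun n => (hWA n).trans (by gcongr; exact hmt n)
      _ = 3 ^ d * (2 ^ t * (∑' n, ediam (T n) ^ t) + ∑' n, δ n) := by
          rw [ENNReal.tsum_mul_left, ENNReal.tsum_add, ENNReal.tsum_mul_left]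
      _ ≤ 3 ^ d * (2 ^ t * ε + ε) := by
          rw [tsum_congr hdiam]
          gcongr
  have hlim : Tendsto (fun ε : ℝ≥0∞ => 3 ^ d * (2 ^ t * ε + ε)) (nhdsWithin 0 (Ioi 0))
      (nhds (3 ^ d * (2 ^ t * 0 + 0))) := by
    refine Tendsto.mono_left ?_ nhdsWithin_le_nhds
    exact ENNReal.Tendsto.const_mul
      ((ENNReal.Tendsto.const_mul tendsto_id (Or.inr hC0)).add tendsto_id) (Or.inr h3)
  have := ge_of_tendsto hlim (eventually_mem_nhdsWithin.mono hbound)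
  simpa using this

end Comparison

/-! ### Compact subsets of large dimension -/

/-- An analytic subset of `𝕋^d` is parametrized by the Baire space through a continuous map for
which the preimages of all dyadic cubes are open: the Polish topology of the parameter space can
be refined so as to make countably many Borel sets clopen. -/
theorem exists_continuous_isOpen_preimage_cube {d : ℕ} {F : Set (Fin d → AddCircle (1 : ℝ))}
    (hF : AnalyticSet F) (hne : F.Nonempty) :
    ∃ g : (ℕ → ℕ) → (Fin d → AddCircle (1 : ℝ)), Continuous g ∧ range g = F ∧
      ∀ i, IsOpen (g ⁻¹' cube i) := by
  classical
  rw [AnalyticSet] at hF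
  obtain ⟨f, hf, hfF⟩ := hF.resolve_left hne.ne_empty
  let c : (ℕ → ℕ) → CubeIndex d → Bool := fun z i => decide (f z ∈ cube i)
  have hc : @Measurable _ _ (borel (ℕ → ℕ)) _ c := by
    let : MeasurableSpace (ℕ → ℕ) := borel (ℕ → ℕ)
    have : BorelSpace (ℕ → ℕ) := ⟨rfl⟩
    refine measurable_pi_lambda _ fun i => ?_
    refine measurable_to_bool ?_
    have : (fun z => c z i) ⁻¹' {true} = f ⁻¹' cube i := by ext z; simp [c]
    rw [this]
    exact hf.measurable (measurableSet_dyadicCube d i.1 i.2)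
  obtain ⟨p, hp, hps, hcp⟩ : ∃ p : (ℕ → ℕ) → (ℕ → ℕ), Continuous p ∧ Function.Surjective p ∧
      Continuous (c ∘ p) := by
    let : MeasurableSpace (ℕ → ℕ) := borel (ℕ → ℕ)
    have : BorelSpace (ℕ → ℕ) := ⟨rfl⟩
    obtain ⟨τ, hτ, hcτ, hP⟩ := hc.exists_continuous
    obtain ⟨p, hp, hps⟩ := @PolishSpace.exists_nat_nat_continuous_surjective (ℕ → ℕ) τ hP _
    exact ⟨p, (@continuous_le_rng _ _ p _ _ _ hτ hp), hps, @Continuous.comp _ _ _ Pi.topologicalSpace τ _ _ _ hcτ hp⟩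
  refine ⟨f ∘ p, hf.comp hp, by rw [hps.range_comp, hfF], fun i => ?_⟩
  have : (f ∘ p) ⁻¹' cube i = (fun z => (c ∘ p) z i) ⁻¹' {true} := by ext z; simp [c]
  rw [this]
  exact (isOpen_discrete _).preimage ((continuous_apply i).comp hcp)

/-- Removing from `L` the cubes in which `L` has dimension at most `r` does not lower the
dimension to `r` in any place `U` where it was larger. -/
theorem lt_dimH_inter_diff {d : ℕ} {r : ℝ≥0∞} {L U : Set (Fin d → AddCircle (1 : ℝ))}
    (h : r < dimH (U ∩ L)) :
    r < dimH (U ∩ (L \ ⋃ i ∈ {i : CubeIndex d | dimH (cube i ∩ L) ≤ r}, cube i)) := by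
  by_contra! hcon
  set B := {i : CubeIndex d | dimH (cube i ∩ L) ≤ r} with hB
  have hsub : U ∩ L ⊆ (U ∩ (L \ ⋃ i ∈ B, cube i)) ∪ ⋃ i ∈ B, cube i ∩ L := by
    rintro x ⟨hxU, hxL⟩
    by_cases hx : x ∈ ⋃ i ∈ B, cube i
    · right
      rw [← iUnion₂_inter]
      exact ⟨hx, hxL⟩
    · exact Or.inl ⟨hxU, hxL, hx⟩
  have h1 := dimH_mono hsub
  rw [dimH_union, dimH_bUnion (to_countable B)] at h1
  exact absurd (h1.trans (max_le hcon (iSup₂_le fun i hi => hi))) (not_le.2 h)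

theorem exists_closed_subset_with_uniform_dimension {d : ℕ} (hd : 1 ≤ d) (s : ℝ)
    (F : Set (Fin d → AddCircle (1 : ℝ))) (hF : AnalyticSet F)
    (hdim : ENNReal.ofReal s < dimH F) :
    ∃ H : Set (Fin d → AddCircle (1 : ℝ)), H.Nonempty ∧ IsClosed H ∧ H ⊆ F ∧
      ∀ (n : ℕ) (k : Fin d → Fin (2 ^ n)), (dyadicCube d n k ∩ H).Nonempty →
        ENNReal.ofReal s < dimH (dyadicCube d n k ∩ H) := by
  have hne : F.Nonempty := by
    rw [nonempty_iff_ne_empty]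
    rintro rfl
    simp at hdim
  obtain ⟨g, hg, hgF, hgo⟩ := exists_continuous_isOpen_preimage_cube hF hne
  obtain ⟨t, hst, htF⟩ := ENNReal.lt_iff_exists_nnreal_btwn.1 hdim
  have ht : (0 : ℝ) < t := by
    exact_mod_cast (zero_le (a := ENNReal.ofReal s)).trans_lt hst
  have hpos : netContent (cubeWeight d t) cube (range g) ≠ 0 := by
    rw [hgF]
    intro h0
    have h1 := hausdorffMeasure_eq_zero_of_netContent_eq_zero ht h0
    rw [hausdorffMeasure_of_lt_dimH htF] at h1
    exact ENNReal.top_ne_zero h1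
  obtain ⟨a, ha0, ha⟩ := exists_between (pos_iff_ne_zero.2 hpos)
  obtain ⟨K, hK, hKa⟩ := exists_isCompact_le_netContent (isNet_cube d) hgo ha
  have hKdim : ENNReal.ofReal s < dimH (g '' K) := by
    refine hst.trans_le (le_dimH_of_hausdorffMeasure_ne_zero fun h0 => ?_)
    rw [netContent_eq_zero_of_hausdorffMeasure_eq_zero ht h0] at hKa
    exact absurd hKa (not_le.2 ha0)
  set r := ENNReal.ofReal s with hr
  set V := ⋃ i ∈ {i : CubeIndex d | dimH (cube i ∩ g '' K) ≤ r}, cube i with hV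
  have hVo : IsOpen (g ⁻¹' V) := by
    rw [hV, preimage_iUnion₂]
    exact isOpen_biUnion fun i _ => hgo i
  refine ⟨g '' K \ V, ?_, ?_, ?_, ?_⟩
  · by_contra hemp
    have h1 := lt_dimH_inter_diff (U := univ) (L := g '' K) (by rwa [univ_inter])
    rw [univ_inter, ← hV, not_nonempty_iff_eq_empty.1 hemp, dimH_empty] at h1
    exact absurd h1 (by simp)
  · rw [← image_sdiff_preimage]
    exact ((hK.diff hVo).image hg).isClosed
  · exact sdiff_subset.trans ((image_subset_range g K).trans hgF.subset)
  · rintro n k ⟨x, hxQ, hxK, hxV⟩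
    refine lt_dimH_inter_diff (not_le.1 fun hle => hxV ?_)
    exact mem_biUnion (x := (⟨n, k⟩ : CubeIndex d)) hle hxQ
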